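/- For every even integer n ≥ 2 there exists a tournament T on n vertices with the following property: for every vertex x of T and every finite set Q of unordered pairs of distinct vertices, if in every tournament T' on the same vertex set that agrees with T on Q the vertex x is a vertex of maximum out-degree, then |Q| ≥ (n−1)(n−2)/2. Hence the worst-case cost of finding a maximum out-degree vertex in a tournament on n vertices (n even) is at least (n−1)(n−2)/2 binary inquiries. -/

import Mathlib

/-- A tournament: irreflexive, and for distinct vertices exactly one orientation holds. -/
def IsTournament {V : Type*} (r : V → V → Prop) : Prop :=
  (∀ x, ¬ r x x) ∧ ∀ x y : V, x ≠ y → (r x y ↔ ¬ r y x)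

open Classical in
/-- Out-degree of a vertex: number of `y` with `r x y`. -/
noncomputable def outDeg {V : Type*} [Fintype V] (r : V → V → Prop) (x : V) : ℕ :=
  (Finset.univ.filter fun y => r x y).card

open Classical in
/-- In-degree of a vertex: number of `y` with `r y x`. -/
noncomputable def inDeg {V : Type*} [Fintype V] (r : V → V → Prop) (x : V) : ℕ :=
  (Finset.univ.filter fun y => r y x).card

/-- A king: reaches every other vertex by a path of length at most 2. -/
def IsKing {V : Type*} (r : V → V → Prop) (x : V) : Prop :=
  ∀ y : V, y ≠ x → r x y ∨ ∃ z, r x z ∧ r z y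

/-- A vertex of maximum out-degree. -/
def IsMOD {V : Type*} [Fintype V] (r : V → V → Prop) (x : V) : Prop :=
  ∀ y : V, outDeg r y ≤ outDeg r x

/-- `r'` agrees with `r` on the set `Q` of unordered pairs. -/
def AgreesOn {V : Type*} (r r' : V → V → Prop) (Q : Set (Sym2 V)) : Prop :=
  ∀ y z : V, s(y, z) ∈ Q → (r' y z ↔ r y z)

/-!
Suppose `Q` certifies `x`. For `y ≠ x`, let an adversary answer every pair at `y` outside `Q` in
favour of `y`. This does not raise the out-degree of `x`, while the only vertices still beating `y`
are those whose win over `y` was revealed by `Q`. As `x` must remain of maximum out-degree,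
at least `|V| - 1 - d⁺(x)` revealed arcs enter `y`. Each arc enters only one vertex, so summing
over `y ≠ x` gives `|Q| ≥ (|V| - 1) (|V| - 1 - d⁺(x))`. It remains to exhibit a tournament on `n`
vertices in which no out-degree exceeds `n / 2`.
-/

/-- The answers to the inquiries in `Q` show that `x` is a vertex of maximum out-degree of `r`. -/
def CertifiesMOD {V : Type*} [Fintype V] (r : V → V → Prop) (Q : Set (Sym2 V)) (x : V) : Prop :=
  ∀ r' : V → V → Prop, IsTournament r' → AgreesOn r r' Q → IsMOD r' x

/-- The arcs of `r` that become known by inquiring the pairs in `Q`. -/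
def revealed {V : Type*} (r : V → V → Prop) (Q : Set (Sym2 V)) (a b : V) : Prop :=
  s(a, b) ∈ Q ∧ r a b

open Classical in
/-- The adversary's tournament: `r` with every pair at `y` outside `Q` reoriented so that `y`
beats the other vertex. -/
def favoring {V : Type*} (r : V → V → Prop) (Q : Set (Sym2 V)) (y a b : V) : Prop :=
  if s(a, b) ∈ Q then r a b else b ≠ y ∧ (a = y ∨ r a b)

/-- A tournament on `Fin n` with out-degrees as equal as possible: the smaller of two vertices beats
the larger one exactly when their parities differ. -/
def parityTournament (n : ℕ) (x y : Fin n) : Prop :=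
  x ≠ y ∧ (x < y ↔ Odd (x.val + y.val))

section Tournament

variable {V : Type*} {r : V → V → Prop}

theorem IsTournament.asymm (hr : IsTournament r) {a b : V} (hab : r a b) : ¬ r b a := by
  have hne : a ≠ b := by
    rintro rfl
    exact hr.1 a hab
  exact (hr.2 a b hne).1 hab

theorem isTournament_favoring (hr : IsTournament r) (Q : Set (Sym2 V)) (y : V) :
    IsTournament (favoring r Q y) := by
  refine ⟨fun a => ?_, fun a b hab => ?_⟩
  · have := hr.1 a
    grind [favoring]
  · have := hr.2 a b hab
    have : s(b, a) = s(a, b) := Sym2.eq_swap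
    grind [favoring]

theorem agreesOn_favoring (r : V → V → Prop) (Q : Set (Sym2 V)) (y : V) :
    AgreesOn r (favoring r Q y) Q := fun _ _ hQ => by
  rw [favoring, if_pos hQ]

variable [Fintype V]

theorem IsTournament.outDeg_add_inDeg_add_one (hr : IsTournament r) (x : V) :
    outDeg r x + inDeg r x + 1 = Fintype.card V := by
  classical
  have hin : (Finset.univ.filter fun y => r y x) =
      (Finset.univ.filter fun y => ¬ r x y).erase x := by
    ext y
    rcases eq_or_ne y x with rfl | hyx
    · simp [hr.1 y]
    · simp [hyx, hr.2 y x hyx]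
  have hx : x ∈ Finset.univ.filter fun y => ¬ r x y := by simp [hr.1 x]
  rw [outDeg, inDeg, hin, add_assoc, Finset.card_erase_add_one hx,
    Finset.card_filter_add_card_filter_not, Finset.card_univ]

theorem sum_inDeg_le_card_of_asymm {Q : Finset (Sym2 V)} (hr : ∀ a b, r a b → ¬ r b a)
    (hQ : ∀ a b, r a b → s(a, b) ∈ Q) : ∑ y, inDeg r y ≤ Q.card := by
  classical
  simp only [inDeg]
  rw [← Finset.card_sigma]
  refine Finset.card_le_card_of_injOn (fun p => s(p.2, p.1)) ?_ ?_
  · rintro ⟨b, a⟩ hab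
    exact hQ a b (by simpa using hab)
  · rintro ⟨b, a⟩ hab ⟨d, c⟩ hcd heq
    replace hab : r a b := by simpa using hab
    replace hcd : r c d := by simpa using hcd
    rcases Sym2.eq_iff.1 heq with ⟨rfl, rfl⟩ | ⟨rfl, rfl⟩
    · rfl
    · exact absurd hcd (hr _ _ hab)

theorem inDeg_favoring_self (r : V → V → Prop) (Q : Set (Sym2 V)) (y : V) :
    inDeg (favoring r Q y) y = inDeg (revealed r Q) y := by
  classical
  exact congrArg Finset.card (Finset.filter_congr fun z _ => by simp [favoring, revealed])

theorem outDeg_favoring_le (r : V → V → Prop) (Q : Set (Sym2 V)) {x y : V} (hxy : x ≠ y) :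
    outDeg (favoring r Q y) x ≤ outDeg r x := by
  classical
  have arc_of_favoring (b : V) : favoring r Q y x b → r x b := by grind [favoring]
  exact Finset.card_le_card (Finset.monotone_filter_right _ fun b _ => arc_of_favoring b)

theorem CertifiesMOD.card_le_outDeg_add_inDeg_revealed {Q : Set (Sym2 V)} {x y : V}
    (hQ : CertifiesMOD r Q x) (hr : IsTournament r) (hxy : x ≠ y) :
    Fintype.card V ≤ outDeg r x + inDeg (revealed r Q) y + 1 :=
  calc
    Fintype.card V = outDeg (favoring r Q y) y + inDeg (favoring r Q y) y + 1 :=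
      ((isTournament_favoring hr Q y).outDeg_add_inDeg_add_one y).symm
    _ ≤ outDeg (favoring r Q y) x + inDeg (favoring r Q y) y + 1 := by
      gcongr
      exact hQ _ (isTournament_favoring hr Q y) (agreesOn_favoring r Q y) y
    _ ≤ outDeg r x + inDeg (revealed r Q) y + 1 := by
      rw [inDeg_favoring_self]
      gcongr
      exact outDeg_favoring_le r Q hxy

theorem CertifiesMOD.mul_sub_outDeg_le_card {Q : Finset (Sym2 V)} {x : V}
    (hQ : CertifiesMOD r ↑Q x) (hr : IsTournament r) :
    (Fintype.card V - 1) * (Fintype.card V - 1 - outDeg r x) ≤ Q.card := by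
  classical
  calc
    (Fintype.card V - 1) * (Fintype.card V - 1 - outDeg r x)
      = ∑ _y ∈ Finset.univ.erase x, (Fintype.card V - 1 - outDeg r x) := by
        rw [Finset.sum_const, smul_eq_mul, Finset.card_erase_of_mem (Finset.mem_univ x),
          Finset.card_univ]
    _ ≤ ∑ y ∈ Finset.univ.erase x, inDeg (revealed r Q) y := by
        refine Finset.sum_le_sum fun y hy => ?_
        have := hQ.card_le_outDeg_add_inDeg_revealed hr (Finset.ne_of_mem_erase hy).symm
        omega
    _ ≤ ∑ y, inDeg (revealed r Q) y := Finset.sum_le_univ_sum_of_nonneg fun _ => Nat.zero_le _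
    _ ≤ Q.card :=
        sum_inDeg_le_card_of_asymm (fun _ _ hab hba => hr.asymm hab.2 hba.2) fun _ _ hab => hab.1

end Tournament

theorem isTournament_parityTournament (n : ℕ) : IsTournament (parityTournament n) := by
  refine ⟨fun x hx => hx.1 rfl, fun x y hxy => ?_⟩
  have hlt : y < x ↔ ¬ x < y := by
    rw [not_lt, hxy.symm.le_iff_lt]
  simp only [parityTournament, ne_eq, hxy, hxy.symm, not_false_eq_true, true_and, hlt,
    Nat.add_comm y.val]
  tauto

theorem outDeg_parityTournament_le (n : ℕ) (x : Fin n) :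
    outDeg (parityTournament n) x ≤ n / 2 := by
  classical
  -- Once `x` is deleted and the vertices are renumbered `0, …, n - 2` in order, the
  -- out-neighbours of `x` are the vertices whose number has the parity of `x`.
  let rank (y : Fin n) : ℕ := if y < x then y else y - 1
  have rank_parity {y : Fin n} (hy : parityTournament n x y) : rank y % 2 = x % 2 := by
    grind [parityTournament]
  have rank_lt {y : Fin n} (hy : parityTournament n x y) : rank y < n - 1 := by
    grind [parityTournament]
  have rank_inj {y z : Fin n} (hy : parityTournament n x y) (hz : parityTournament n x z)
      (h : rank y = rank z) : y = z := by
    grind [parityTournament]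
  rw [outDeg, ← Finset.card_range (n / 2)]
  refine Finset.card_le_card_of_injOn (fun y => rank y / 2) (fun y hy => ?_)
    fun y hy z hz hyz => ?_
  · have := rank_lt (by simpa using hy)
    simp only [Finset.coe_range, Set.mem_Iio]
    omega
  · replace hy : parityTournament n x y := by simpa using hy
    replace hz : parityTournament n x z := by simpa using hz
    have := rank_parity hy
    have := rank_parity hz
    exact rank_inj hy hz (by grind)

theorem worst_case_cost_even_general (n : ℕ) :
    ∃ r : Fin n → Fin n → Prop, IsTournament r ∧
      ∀ (x : Fin n) (Q : Finset (Sym2 (Fin n))), CertifiesMOD r ↑Q x →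
        (n - 1) * ((n - 1) / 2) ≤ Q.card := by
  have hr := isTournament_parityTournament n
  refine ⟨parityTournament n, hr, fun x Q hQ => ?_⟩
  have hdeg : (n - 1) / 2 ≤ n - 1 - outDeg (parityTournament n) x := by
    have := outDeg_parityTournament_le n x
    omega
  calc
    (n - 1) * ((n - 1) / 2) ≤ (n - 1) * (n - 1 - outDeg (parityTournament n) x) := by gcongr
    _ ≤ Q.card := by simpa using hQ.mul_sub_outDeg_le_card hr

/-- for every even `n ≥ 2` there is a tournament on `n` vertices such that
any query set `Q` certifying some vertex `x` as a vertex of maximum out-degree satisfies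
`|Q| ≥ (n-1)(n-2)/2`. -/
theorem worst_case_cost_even (n : ℕ) (hn : 2 ≤ n) (heven : Even n) :
    ∃ r : Fin n → Fin n → Prop, IsTournament r ∧
      ∀ (x : Fin n) (Q : Finset (Sym2 (Fin n))), (∀ p ∈ Q, ¬ p.IsDiag) →
        (∀ r' : Fin n → Fin n → Prop, IsTournament r' → AgreesOn r r' ↑Q → IsMOD r' x) →
        (n - 1) * (n - 2) / 2 ≤ Q.card := by
  obtain ⟨r, hr, hcost⟩ := worst_case_cost_even_general n
  refine ⟨r, hr, fun x Q _ hQ => le_trans ?_ (hcost x Q hQ)⟩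
  rw [Nat.mul_div_assoc _ (Nat.dvd_sub heven.two_dvd dvd_rfl)]
  gcongr
  omega
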